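/- arXiv:1606.00716 — 2 statements merged into one kernel-verified Lean document; each statement's English description precedes it below -/
import Mathlib

section
/- For every $n\ge0$ and real $t$: $|B_n|^2=\sum_{r=0}^n t^{2r}L_r(n)$, where $L_r(n)=\sum_{0\le k\le l\le n}\rho_k\rho_l\,2^{(k,l)}\,\theta^lK_r(n-l)$, with $2^{(k,l)}=2$ if $k\ne l$ and $1$ if $k=l$. -/
open scoped Classical

/-- `ρ 0 = 1`, `ρ n = a 1 ⋯ a n`. -/
noncomputable def rho (a : ℕ → ℝ) (n : ℕ) : ℝ := ∏ k ∈ Finset.Icc 1 n, a k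

/-- `R_k^l = ∑_{s=k}^l η s · ρ l / ρ s`. -/
noncomputable def Rkl (a η : ℕ → ℝ) (k l : ℕ) : ℝ :=
  ∑ s ∈ Finset.Icc k l, η s * (rho a l / rho a s)

/-- `T_k^l = (R_k^l)² ρ (k-1) / ρ l`. -/
noncomputable def Tkl (a η : ℕ → ℝ) (k l : ℕ) : ℝ :=
  (Rkl a η k l) ^ 2 * (rho a (k - 1) / rho a l)

/-- `Δ_r^n = ∑_{1 ≤ k₁ < ⋯ < k_r ≤ n} R_1^{k₁} R_{k₁+1}^{k₂} ⋯ R_{k_{r-1}+1}^{k_r}`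
(`Δ_0^n = 1`, and `Δ_r^n = 0` for `r > n`). -/
noncomputable def Delta (a η : ℕ → ℝ) (r n : ℕ) : ℝ :=
  ∑ k ∈ (Fintype.piFinset fun _ : Fin r => Finset.Icc 1 n).filter
      (fun k => ∀ i j : Fin r, i < j → k i < k j),
    ∏ i : Fin r, Rkl a η (if (i : ℕ) = 0 then 1 else k ⟨(i : ℕ) - 1, Nat.lt_of_le_of_lt (Nat.sub_le _ _) i.isLt⟩ + 1) (k i)

/-- `K_r(n) = ∑_{p=-r}^r (-1)^p Δ_{r+p}^n Δ_{r-p}^n`. -/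
noncomputable def Kr (a η : ℕ → ℝ) (r n : ℕ) : ℝ :=
  ∑ p ∈ Finset.Icc (-(r : ℤ)) (r : ℤ),
    (-1 : ℝ) ^ p * Delta a η ((r : ℤ) + p).toNat n * Delta a η ((r : ℤ) - p).toNat n

/-- Shift of the data: `θ^j` replaces `(a k, η k)` by `(a (k+j), η (k+j))`. -/
def shift (f : ℕ → ℝ) (j : ℕ) : ℕ → ℝ := fun k => f (k + j)


/-- Solution of the three-term recursion with index shifted by one: `Ys 0 = u`, `Ys 1 = 1`. -/
noncomputable def Ys (a η : ℕ → ℝ) (t : ℝ) (u : ℂ) : ℕ → ℂ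
  | 0 => u
  | 1 => 1
  | (n + 2) => (1 + (a (n + 1) : ℂ) - Complex.I * t * η (n + 1)) * Ys a η t u (n + 1)
      - a (n + 1) * Ys a η t u n

lemma shift_shift (f : ℕ → ℝ) (l : ℕ) : shift (shift f 1) l = shift f (l + 1) := by
  funext k; simp only [shift]; congr 1

lemma shift_zero (f : ℕ → ℝ) : shift f 0 = f := rfl

lemma rho_succ (a : ℕ → ℝ) (n : ℕ) : rho a (n + 1) = rho a n * a (n + 1) := by
  unfold rho; rw [Finset.prod_Icc_succ_top (by omega)]

lemma rho_zero (a : ℕ → ℝ) : rho a 0 = 1 := by simp [rho]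

lemma rho_succ' (a : ℕ → ℝ) (n : ℕ) : rho a (n + 1) = a 1 * rho (shift a 1) n := by
  induction n with
  | zero => simp [rho_succ, rho_zero]
  | succ n ih => rw [rho_succ, ih, rho_succ]; simp only [shift]; ring

lemma Ds_sub (a η : ℕ → ℝ) (t : ℝ) (n : ℕ) :
    Ys a η t 1 (n + 1) - Ys (shift a 1) (shift η 1) t 1 n
      = -(Complex.I * t * η 1) * Ys (shift a 1) (shift η 1) t 0 n := by
  induction n using Nat.strong_induction_on with
  | _ n ih =>
    match n with
    | 0 => simp [Ys]
    | 1 => simp [Ys]; ring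
    | n + 2 =>
      have h1 := ih n (by omega)
      have h2 := ih (n + 1) (by omega)
      simp only [Ys, shift] at h1 h2 ⊢
      linear_combination (1 + (a (n + 1 + 1) : ℂ) - Complex.I * t * η (n + 1 + 1)) * h2
        - a (n + 1 + 1) * h1

lemma Bs_eq (a η : ℕ → ℝ) (t : ℝ) (n : ℕ) :
    Ys a η t 0 (n + 1) = Ys a η t 1 (n + 1)
      + a 1 * Ys (shift a 1) (shift η 1) t 0 n := by
  induction n using Nat.strong_induction_on with
  | _ n ih =>
    match n with
    | 0 => simp [Ys]
    | 1 => simp [Ys]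
    | n + 2 =>
      have h1 := ih n (by omega)
      have h2 := ih (n + 1) (by omega)
      simp only [Ys, shift] at h1 h2 ⊢
      linear_combination (1 + (a (n + 1 + 1) : ℂ) - Complex.I * t * η (n + 1 + 1)) * h2
        - a (n + 1 + 1) * h1

/-- real inner product -/
def ip (z w : ℂ) : ℝ := z.re * w.re + z.im * w.im

lemma DB (t : ℝ) (n : ℕ) : ∀ a η : ℕ → ℝ,
    ip (Ys a η t 1 (n + 1)) (Ys a η t 0 (n + 1)) =
      ∑ l ∈ Finset.range (n + 1), rho a l *
        Complex.normSq (Ys (shift a l) (shift η l) t 1 (n - l + 1)) := by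
  induction n with
  | zero => intro a η; simp [Ys, ip, rho_zero]
  | succ n ih =>
    intro a η
    rw [Finset.sum_range_succ']
    have h := ih (shift a 1) (shift η 1)
    have e : ∀ l, n + 1 - (l + 1) = n - l := fun l => by omega
    simp only [shift_shift] at h
    simp only [rho_succ', e, mul_assoc, ← Finset.mul_sum, ← h]
    simp only [shift_zero, rho_zero, Nat.sub_zero]
    have h1 := Bs_eq a η t (n + 1)
    have h2 := Ds_sub a η t (n + 1)
    rw [h1]
    have h3 := eq_add_of_sub_eq h2
    set D := Ys a η t 1 (n + 1 + 1)
    set D' := Ys (shift a 1) (shift η 1) t 1 (n + 1)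
    set B' := Ys (shift a 1) (shift η 1) t 0 (n + 1)
    have hr := congrArg Complex.re h3
    have hi := congrArg Complex.im h3
    simp at hr hi
    simp only [ip, Complex.normSq_apply]
    simp
    linear_combination (a 1 * B'.re) * hr + (a 1 * B'.im) * hi

lemma BB (t : ℝ) (n : ℕ) : ∀ a η : ℕ → ℝ,
    Complex.normSq (Ys a η t 0 (n + 1)) =
      ∑ l ∈ Finset.range (n + 1), ∑ k ∈ Finset.range (l + 1),
        rho a k * rho a l * (if k = l then (1 : ℝ) else 2) *
          Complex.normSq (Ys (shift a l) (shift η l) t 1 (n - l + 1)) := by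
  induction n with
  | zero => intro a η; simp [Ys, rho_zero]
  | succ n ih =>
    intro a η
    have hDB := DB t (n + 1) a η
    rw [Finset.sum_range_succ'] at hDB ⊢
    have h := ih (shift a 1) (shift η 1)
    have e : ∀ l, n + 1 - (l + 1) = n - l := fun l => by omega
    have h1 := Bs_eq a η t (n + 1)
    have key : ∀ l, ∑ k ∈ Finset.range (l + 1 + 1),
        rho a k * rho a (l + 1) * (if k = l + 1 then (1 : ℝ) else 2) *
          Complex.normSq (Ys (shift a (l + 1)) (shift η (l + 1)) t 1 (n + 1 - (l + 1) + 1))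
        = a 1 ^ 2 * (∑ k ∈ Finset.range (l + 1),
        rho (shift a 1) k * rho (shift a 1) l * (if k = l then (1 : ℝ) else 2) *
          Complex.normSq (Ys (shift (shift a 1) l) (shift (shift η 1) l) t 1 (n - l + 1)))
          + 2 * (rho a (l + 1) * Complex.normSq (Ys (shift a (l + 1)) (shift η (l + 1)) t 1 (n + 1 - (l + 1) + 1))) := by
      intro l
      rw [Finset.sum_range_succ', Finset.mul_sum]
      congr 1
      · refine Finset.sum_congr rfl fun k _ => ?_
        simp only [rho_succ', e, shift_shift, Nat.add_right_cancel_iff]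
        ring
      · simp [rho_zero]; ring
    rw [Finset.sum_congr rfl (fun l _ => key l), Finset.sum_add_distrib, ← Finset.mul_sum, ← Finset.mul_sum,
      ← h, eq_sub_of_add_eq hDB.symm]
    rw [h1]
    simp only [ip, Complex.normSq_apply, shift_zero, rho_zero]
    simp [rho_zero]
    ring

/-! ### The sums `Delta` -/

/-- index set -/
noncomputable def SI (r n : ℕ) : Finset (Fin r → ℕ) :=
  (Fintype.piFinset fun _ : Fin r => Finset.Icc 1 n).filter
      (fun k => ∀ i j : Fin r, i < j → k i < k j)

lemma mem_SI {r n : ℕ} {k : Fin r → ℕ} :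
    k ∈ SI r n ↔ (∀ i, 1 ≤ k i ∧ k i ≤ n) ∧ ∀ i j : Fin r, i < j → k i < k j := by
  simp [SI]

/-- product -/
noncomputable def PI (a η : ℕ → ℝ) {r : ℕ} (k : Fin r → ℕ) : ℝ :=
  ∏ i : Fin r, Rkl a η (if (i : ℕ) = 0 then 1 else k ⟨(i : ℕ) - 1, Nat.lt_of_le_of_lt (Nat.sub_le _ _) i.isLt⟩ + 1) (k i)

lemma Delta_eq (a η : ℕ → ℝ) (r n : ℕ) : Delta a η r n = ∑ k ∈ SI r n, PI a η k := rfl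

/-- last entry -/
def lst {r : ℕ} (k : Fin r → ℕ) : ℕ := if h : 0 < r then k ⟨r - 1, by omega⟩ else 0

/-- append an entry -/
def app {r : ℕ} (k : Fin r → ℕ) (m : ℕ) : Fin (r + 1) → ℕ :=
  fun i => if h : (i : ℕ) < r then k ⟨i, h⟩ else m

lemma PI_app (a η : ℕ → ℝ) {r : ℕ} (k : Fin r → ℕ) (m : ℕ) :
    PI a η (app k m) = PI a η k * Rkl a η (lst k + 1) m := by
  unfold PI
  rw [Fin.prod_univ_castSucc]
  congr 1
  · refine Finset.prod_congr rfl fun i _ => ?_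
    have : (i : ℕ) - 1 < r := by omega
    simp [app, this]
  · by_cases h : r = 0
    · subst h; simp [app, lst]
    · have h1 : 0 < r := by omega
      simp [app, lst, h, h1]

lemma lst_le {r n : ℕ} {k : Fin r → ℕ} (hk : k ∈ SI r n) : lst k ≤ n := by
  rw [mem_SI] at hk
  unfold lst
  split_ifs
  · exact (hk.1 _).2
  · omega

lemma le_lst {r n : ℕ} {k : Fin r → ℕ} (hk : k ∈ SI r n) (i : Fin r) : k i ≤ lst k := by
  rw [mem_SI] at hk
  unfold lst
  have h : 0 < r := i.pos
  rw [dif_pos h]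
  rcases eq_or_ne i ⟨r - 1, by omega⟩ with e | e
  · rw [← e]
  · refine (hk.2 _ _ ?_).le
    rw [Fin.lt_def]
    have : (i : ℕ) ≠ r - 1 := fun h => e (Fin.ext h)
    simp only; omega

lemma SI_mono (r n : ℕ) : SI r n ⊆ SI r (n + 1) := by
  intro k hk
  rw [mem_SI] at hk ⊢
  exact ⟨fun i => ⟨(hk.1 i).1, by have := (hk.1 i).2; omega⟩, hk.2⟩

lemma lst_sdiff {r n : ℕ} {k : Fin r → ℕ} (hk : k ∈ SI r (n + 1)) (hn : k ∉ SI r n) :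
    lst k = n + 1 := by
  have h1 := lst_le hk
  by_contra hne
  apply hn
  have h2 := fun i => le_lst hk i
  rw [mem_SI] at hk ⊢
  exact ⟨fun i => ⟨(hk.1 i).1, by have := h2 i; omega⟩, hk.2⟩

lemma app_mem {r n : ℕ} {k : Fin r → ℕ} (hk : k ∈ SI r n) :
    app k (n + 1) ∈ SI (r + 1) (n + 1) := by
  rw [mem_SI] at hk ⊢
  constructor
  · intro i
    unfold app
    split_ifs with h
    · have := hk.1 ⟨i, h⟩; omega
    · omega
  · intro i j hij
    rw [Fin.lt_def] at hij
    unfold app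
    split_ifs with h h' h'
    · exact hk.2 _ _ (by rw [Fin.lt_def]; exact hij)
    · have := (hk.1 ⟨i, h⟩).2; omega
    · omega
    · omega

lemma Delta_step (a η : ℕ → ℝ) (r n : ℕ) :
    Delta a η (r + 1) (n + 1) = Delta a η (r + 1) n +
      ∑ k ∈ SI r n, PI a η k * Rkl a η (lst k + 1) (n + 1) := by
  simp only [Delta_eq]
  rw [← Finset.sum_sdiff (SI_mono (r + 1) n), add_comm]
  congr 1
  symm
  refine Finset.sum_bij' (fun k _ => app k (n + 1)) (fun k _ i => k i.castSucc) ?_ ?_ ?_ ?_ ?_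
  · intro k hk
    rw [Finset.mem_sdiff]
    refine ⟨app_mem hk, fun h => ?_⟩
    have := ((mem_SI.1 h).1 (Fin.last r)).2
    simp [app] at this
  · intro k hk
    rw [Finset.mem_sdiff] at hk
    have h := mem_SI.1 hk.1
    rw [mem_SI]
    refine ⟨fun i => ⟨(h.1 _).1, ?_⟩, fun i j hij => h.2 _ _ (by simpa using hij)⟩
    have h1 := h.2 i.castSucc (Fin.last r) (Fin.castSucc_lt_last i)
    have h2 := (h.1 (Fin.last r)).2
    omega
  · intro k hk
    funext i
    simp [app]
  · intro k hk
    rw [Finset.mem_sdiff] at hk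
    have h := lst_sdiff hk.1 hk.2
    funext i
    unfold app
    split_ifs with hi
    · rfl
    · rw [← h]
      unfold lst
      rw [dif_pos (by omega)]
      congr 1
      apply Fin.ext
      simp only; omega
  · intro k hk
    rw [PI_app]

/-- the auxiliary sums -/
noncomputable def US (a η : ℕ → ℝ) (r n : ℕ) : ℝ :=
  ∑ k ∈ SI r n, PI a η k * Rkl a η (lst k + 1) n

lemma Rkl_empty (a η : ℕ → ℝ) (n : ℕ) : Rkl a η (n + 1) n = 0 := by
  simp [Rkl]

lemma rho_ne {a : ℕ → ℝ} (ha : ∀ k, 1 ≤ k → a k ≠ 0) (n : ℕ) : rho a n ≠ 0 := by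
  unfold rho
  exact Finset.prod_ne_zero_iff.2 fun k hk => ha k (Finset.mem_Icc.1 hk).1

lemma Rkl_succ {a : ℕ → ℝ} (η : ℕ → ℝ) (ha : ∀ k, 1 ≤ k → a k ≠ 0) {j n : ℕ} (h : j ≤ n) :
    Rkl a η (j + 1) (n + 1) = a (n + 1) * Rkl a η (j + 1) n + η (n + 1) := by
  unfold Rkl
  rw [Finset.sum_Icc_succ_top (by omega), div_self (rho_ne ha _), Finset.mul_sum, mul_one]
  congr 1
  refine Finset.sum_congr rfl fun s _ => ?_
  rw [rho_succ]; ring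

lemma US_step (a η : ℕ → ℝ) (r n : ℕ) :
    Delta a η (r + 1) (n + 1) = Delta a η (r + 1) n + US a η r (n + 1) := by
  rw [Delta_step]
  congr 1
  unfold US
  refine Finset.sum_subset (SI_mono r n) fun k hk hn => ?_
  rw [lst_sdiff hk hn, Rkl_empty, mul_zero]

lemma US_succ {a : ℕ → ℝ} (η : ℕ → ℝ) (ha : ∀ k, 1 ≤ k → a k ≠ 0) (r n : ℕ) :
    US a η r (n + 1) = a (n + 1) * US a η r n + η (n + 1) * Delta a η r n := by
  have h1 := US_step a η r n
  rw [Delta_step] at h1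
  rw [← add_left_cancel h1, Delta_eq, US, Finset.mul_sum, Finset.mul_sum, ← Finset.sum_add_distrib]
  refine Finset.sum_congr rfl fun k hk => ?_
  rw [Rkl_succ η ha (lst_le hk)]
  ring

lemma US_zero (a η : ℕ → ℝ) (r : ℕ) : US a η r 0 = 0 := by
  unfold US
  refine Finset.sum_eq_zero fun k hk => ?_
  have : lst k = 0 := by have := lst_le hk; omega
  rw [this, Rkl_empty, mul_zero]

lemma Delta_zero (a η : ℕ → ℝ) (n : ℕ) : Delta a η 0 n = 1 := by
  simp [Delta]

lemma Delta_gt (a η : ℕ → ℝ) {r n : ℕ} (h : n < r) : Delta a η r n = 0 := by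
  rw [Delta_eq]
  refine Finset.sum_eq_zero fun k hk => ?_
  exfalso
  rw [mem_SI] at hk
  have hinj : Function.Injective k := by
    have : StrictMono k := fun i j hij => hk.2 i j hij
    exact this.injective
  have hc := Finset.card_le_card_of_injOn (s := Finset.univ) (t := Finset.Icc 1 n) k
    (fun i _ => by simpa using hk.1 i) hinj.injOn
  simp at hc
  omega

/-- generating polynomial of `Delta` -/
noncomputable def ES (a η : ℕ → ℝ) (z : ℂ) (N n : ℕ) : ℂ :=
  ∑ r ∈ Finset.range (N + 1), (Delta a η r n : ℂ) * z ^ r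

/-- generating polynomial of `US` -/
noncomputable def VS (a η : ℕ → ℝ) (z : ℂ) (N n : ℕ) : ℂ :=
  ∑ r ∈ Finset.range N, (US a η r n : ℂ) * z ^ (r + 1)

lemma ES_succ (a η : ℕ → ℝ) (z : ℂ) (N n : ℕ) :
    ES a η z N (n + 1) = ES a η z N n + VS a η z N (n + 1) := by
  unfold ES VS
  rw [Finset.sum_range_succ', Finset.sum_range_succ' _ N, Delta_zero, Delta_zero]
  simp only [US_step, Complex.ofReal_add, add_mul, Finset.sum_add_distrib]
  ring

lemma VS_succ {a : ℕ → ℝ} (η : ℕ → ℝ) (ha : ∀ k, 1 ≤ k → a k ≠ 0) (z : ℂ) (N n : ℕ)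
    (h : n < N) :
    VS a η z N (n + 1) = a (n + 1) * VS a η z N n + η (n + 1) * z * ES a η z N n := by
  unfold ES VS
  rw [Finset.sum_range_succ, Delta_gt a η h, Finset.mul_sum]
  simp only [Complex.ofReal_zero, zero_mul, add_zero]
  rw [Finset.mul_sum, ← Finset.sum_add_distrib]
  refine Finset.sum_congr rfl fun r _ => ?_
  rw [US_succ η ha]
  push_cast
  ring

lemma Ds_ES {a : ℕ → ℝ} (η : ℕ → ℝ) (ha : ∀ k, 1 ≤ k → a k ≠ 0) (t : ℝ) (N n : ℕ)
    (h : n ≤ N) :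
    Ys a η t 1 (n + 1) = ES a η (-(Complex.I * t)) N n ∧
    Ys a η t 1 (n + 1) - Ys a η t 1 n = VS a η (-(Complex.I * t)) N n := by
  induction n with
  | zero =>
    constructor
    · unfold ES
      rw [Finset.sum_range_succ', Finset.sum_eq_zero, Delta_zero]
      · simp [Ys]
      · intro r _; rw [Delta_gt a η (by omega)]; simp
    · simp [VS, US_zero, Ys]
  | succ n ih =>
    obtain ⟨h1, h2⟩ := ih (by omega)
    have h3 := ES_succ a η (-(Complex.I * t)) N n
    have h4 := VS_succ η ha (-(Complex.I * t)) N n (by omega)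
    rw [← h1, ← h2] at h4
    rw [← h1] at h3
    have h5 : Ys a η t 1 (n + 1 + 1) - Ys a η t 1 (n + 1) = VS a η (-(Complex.I * t)) N (n + 1) := by
      rw [h4]; simp only [Ys]; ring
    refine ⟨?_, h5⟩
    rw [h3, ← h5]; ring

lemma sum_even_odd (g : ℕ → ℂ) (N : ℕ) :
    ∑ m ∈ Finset.range (2 * N + 1), g m =
      ∑ r ∈ Finset.range (N + 1), g (2 * r) + ∑ r ∈ Finset.range N, g (2 * r + 1) := by
  induction N with
  | zero => simp
  | succ N ih =>
    rw [show 2 * (N + 1) + 1 = 2 * N + 1 + 1 + 1 by ring, Finset.sum_range_succ,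
      Finset.sum_range_succ, ih, Finset.sum_range_succ _ (N + 1),
      Finset.sum_range_succ (fun r => g (2 * r + 1)) N,
      show 2 * (N + 1) = 2 * N + 1 + 1 by ring]
    ring

lemma Kr_anti (a η : ℕ → ℝ) (r n : ℕ) :
    Kr a η r n = ∑ q ∈ Finset.HasAntidiagonal.antidiagonal (2 * r),
      (-1 : ℝ) ^ (q.1 + r) * Delta a η q.1 n * Delta a η q.2 n := by
  unfold Kr
  refine Finset.sum_bij' (fun p _ => (((r : ℤ) + p).toNat, ((r : ℤ) - p).toNat))
    (fun q _ => (q.1 : ℤ) - r) ?_ ?_ ?_ ?_ ?_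
  · intro p hp
    simp at hp ⊢; omega
  · intro q hq
    simp at hq ⊢; omega
  · intro p hp
    simp at hp ⊢; omega
  · rintro ⟨q1, q2⟩ hq
    simp at hq ⊢; omega
  · intro p hp
    congr 2
    simp at hp
    simp only
    rw [← zpow_natCast]
    have : (((((r : ℤ) + p).toNat + r : ℕ)) : ℤ) = p + 2 * r := by omega
    rw [this, zpow_add₀ (by norm_num), zpow_mul]
    simp

lemma normSq_ES (a η : ℕ → ℝ) (t : ℝ) (N n : ℕ) (h : n ≤ N) :
    Complex.normSq (ES a η (-(Complex.I * t)) N n) =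
      ∑ r ∈ Finset.range (N + 1), t ^ (2 * r) * Kr a η r n := by
  set z : ℂ := -(Complex.I * t) with hz
  have hcz : (starRingEnd ℂ) z = -z := by simp [hz]
  set d : ℕ → ℂ := fun r => (Delta a η r n : ℂ) with hd
  have hd0 : ∀ r, N < r → d r = 0 := fun r hr => by
    simp only [hd]; rw [Delta_gt a η (by omega)]; simp
  have key : (∑ r ∈ Finset.range (N + 1), d r * z ^ r) * (∑ r ∈ Finset.range (N + 1), d r * (-z) ^ r)
      = ∑ m ∈ Finset.range (2 * N + 1), ∑ q ∈ Finset.HasAntidiagonal.antidiagonal m,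
        (d q.1 * z ^ q.1) * (d q.2 * (-z) ^ q.2) := by
    rw [Finset.sum_mul_sum, ← Finset.sum_product', Finset.sum_sigma']
    symm
    refine Finset.sum_bij_ne_zero (fun x _ _ => x.2) ?_ ?_ ?_ ?_
    · rintro ⟨m, q1, q2⟩ hx hne
      simp only [Finset.mem_product, Finset.mem_range]
      constructor
      · by_contra hc; apply hne; simp [hd0 q1 (by omega)]
      · by_contra hc; apply hne; simp [hd0 q2 (by omega)]
    · rintro ⟨m, q1, q2⟩ hx _ ⟨m', q1', q2'⟩ hx' _ he
      simp at hx hx' he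
      obtain ⟨rfl, rfl⟩ := he
      obtain ⟨_, rfl⟩ := hx
      obtain ⟨_, rfl⟩ := hx'
      rfl
    · rintro ⟨q1, q2⟩ hq hne
      simp at hq
      exact ⟨⟨q1 + q2, q1, q2⟩, by simp; omega, hne, rfl⟩
    · intros; rfl
  have hodd : ∀ r, ∑ q ∈ Finset.HasAntidiagonal.antidiagonal (2 * r + 1),
        (d q.1 * z ^ q.1) * (d q.2 * (-z) ^ q.2) = 0 := by
    intro r
    have hs := Finset.Nat.sum_antidiagonal_swap (n := 2 * r + 1)
      (f := fun q => (d q.1 * z ^ q.1) * (d q.2 * (-z) ^ q.2))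
    have : ∑ q ∈ Finset.HasAntidiagonal.antidiagonal (2 * r + 1), (d q.swap.1 * z ^ q.swap.1) * (d q.swap.2 * (-z) ^ q.swap.2)
       = - ∑ q ∈ Finset.HasAntidiagonal.antidiagonal (2 * r + 1), (d q.1 * z ^ q.1) * (d q.2 * (-z) ^ q.2) := by
      rw [← Finset.sum_neg_distrib]
      refine Finset.sum_congr rfl fun q hq => ?_
      rw [Finset.HasAntidiagonal.mem_antidiagonal] at hq
      have e : (-1 : ℂ) ^ q.1 * (-1) ^ q.2 = -1 := by
        rw [← pow_add, hq, pow_succ, pow_mul]; simp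
      have e2 : (-1 : ℂ) ^ q.2 * (-1) ^ q.2 = 1 := by
        rw [← mul_pow]; simp
      have e3 : (-1 : ℂ) ^ q.1 = - (-1) ^ q.2 := by
        linear_combination (-1 : ℂ) ^ q.2 * e - (-1) ^ q.1 * e2
      simp only [Prod.fst_swap, Prod.snd_swap]
      rw [neg_pow z q.1, neg_pow z q.2, e3]
      ring
    rw [this] at hs
    exact self_eq_neg.1 hs.symm
  have heven : ∀ r, ∑ q ∈ Finset.HasAntidiagonal.antidiagonal (2 * r),
        (d q.1 * z ^ q.1) * (d q.2 * (-z) ^ q.2) = ((t ^ (2 * r) * Kr a η r n : ℝ) : ℂ) := by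
    intro r
    rw [Kr_anti, Complex.ofReal_mul, Complex.ofReal_sum, Finset.mul_sum]
    refine Finset.sum_congr rfl fun q hq => ?_
    rw [Finset.HasAntidiagonal.mem_antidiagonal] at hq
    have ez : z ^ q.1 * z ^ q.2 = (-1) ^ r * (t : ℂ) ^ (2 * r) := by
      rw [← pow_add, hq, pow_mul, pow_mul, ← mul_pow]
      congr 1
      rw [hz]; ring_nf; simp
    have e : (-1 : ℂ) ^ q.1 * (-1) ^ q.2 = 1 := by
      rw [← pow_add, hq, pow_mul]; simp
    have e2 : (-1 : ℂ) ^ q.2 * (-1) ^ q.2 = 1 := by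
      rw [← mul_pow]; simp
    have e3 : (-1 : ℂ) ^ q.2 = (-1) ^ q.1 := by
      linear_combination (-1 : ℂ) ^ q.1 * e2 - (-1) ^ q.2 * e
    rw [neg_pow z q.2, e3]
    push_cast
    simp only [hd, pow_add]
    linear_combination ((-1 : ℂ) ^ q.1 * Delta a η q.1 n * Delta a η q.2 n) * ez
  have hc : (starRingEnd ℂ) (ES a η z N n) = ∑ r ∈ Finset.range (N + 1), d r * (-z) ^ r := by
    unfold ES
    rw [map_sum]
    refine Finset.sum_congr rfl fun r _ => ?_
    rw [map_mul, map_pow, hcz, Complex.conj_ofReal]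
  have : ((Complex.normSq (ES a η z N n) : ℝ) : ℂ) =
      ((∑ r ∈ Finset.range (N + 1), t ^ (2 * r) * Kr a η r n : ℝ) : ℂ) := by
    rw [← Complex.mul_conj, hc]
    unfold ES
    rw [key, sum_even_odd]
    simp only [hodd, heven, Finset.sum_const_zero, add_zero, Complex.ofReal_sum]
  exact_mod_cast this

/-- `|B n|² = ∑_{r=0}^n t^{2r} L_r(n)` with
`L_r(n) = ∑_{0≤k≤l≤n} ρ k ρ l 2^{(k,l)} θ^l K_r(n-l)`. -/
theorem stmt_15
    (a η : ℕ → ℝ) (ha : ∀ k : ℕ, 1 ≤ k → 0 < a k) (t : ℝ)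
    (B : ℤ → ℂ) (hBm : B (-1) = 0) (hB0 : B 0 = 1)
    (hB : ∀ n : ℕ, 1 ≤ n →
      B (n : ℤ) = (((1 + a n : ℝ) : ℂ) - Complex.I * (t : ℂ) * ((η n : ℝ) : ℂ)) * B ((n : ℤ) - 1)
        - ((a n : ℝ) : ℂ) * B ((n : ℤ) - 2))
    (A : ℤ → ℂ) (hA0 : A 0 = 0) (hA1 : A 1 = ((a 1 : ℝ) : ℂ))
    (hA : ∀ n : ℕ, 2 ≤ n →
      A (n : ℤ) = (((1 + a n : ℝ) : ℂ) - Complex.I * (t : ℂ) * ((η n : ℝ) : ℂ)) * A ((n : ℤ) - 1)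
        - ((a n : ℝ) : ℂ) * A ((n : ℤ) - 2)) :
    ∀ n : ℕ,
      ‖B (n : ℤ)‖ ^ 2 =
        ∑ r ∈ Finset.range (n + 1), t ^ (2 * r) *
          ∑ l ∈ Finset.range (n + 1), ∑ k ∈ Finset.range (l + 1),
            rho a k * rho a l * (if k = l then (1 : ℝ) else 2) *
              Kr (shift a l) (shift η l) r (n - l) := by
  intro n
  have hY : ∀ m : ℕ, B ((m : ℤ) - 1) = Ys a η t 0 m := by
    intro m
    induction m using Nat.strong_induction_on with
    | _ m ih =>
      match m with
      | 0 => simpa [Ys] using hBm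
      | 1 => simpa [Ys] using hB0
      | m + 2 =>
        have h1 := ih m (by omega)
        have h2 := ih (m + 1) (by omega)
        have h := hB (m + 1) (by omega)
        have e0 : (((m + 2 : ℕ) : ℤ) - 1) = ((m + 1 : ℕ) : ℤ) := by push_cast; ring
        have e1 : (((m + 1 : ℕ) : ℤ) - 2) = (m : ℤ) - 1 := by push_cast; ring
        rw [e0, h, e1, h1, h2]
        simp only [Ys]
        push_cast
        ring
  have hn : B (n : ℤ) = Ys a η t 0 (n + 1) := by
    rw [← hY]; congr 1; push_cast; ring
  rw [hn, ← Complex.normSq_eq_norm_sq, BB]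
  simp only [Finset.mul_sum]
  rw [Finset.sum_comm]
  refine Finset.sum_congr rfl fun l hl => ?_
  rw [Finset.sum_comm]
  refine Finset.sum_congr rfl fun k hk => ?_
  have ha' : ∀ k, 1 ≤ k → shift a l k ≠ 0 := fun k hk => (ha _ (by omega)).ne'
  rw [(Ds_ES (shift η l) ha' t n (n - l) (by omega)).1, normSq_ES _ _ _ _ _ (by omega), Finset.mul_sum]
  refine Finset.sum_congr rfl fun r _ => ?_
  ring
end

section
/- For every $n\ge0$ and real $t$: $\mathrm{Re}\big((B_n-A_n)\overline{B_n}\big)=\sum_{r=0}^n t^{2r}M_r(n)$, where $M_r(n)=\sum_{0\le k\le n}\rho_k\,\theta^kK_r(n-k)$. -/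
open scoped Classical

lemma sum_Icc_split {M : Type*} [AddCommMonoid M] {f : ℕ → M} {k l : ℕ} (h : k ≤ l) :
    ∑ s ∈ Finset.Icc k l, f s = f k + ∑ s ∈ Finset.Icc (k + 1) l, f s := by
  rw [← Finset.add_sum_Ioc_eq_sum_Icc h]
  congr 1
  exact Finset.sum_congr (by ext; simp) fun _ _ => rfl

/-- Tuple version with general starting point. -/
noncomputable def Gdef (a η : ℕ → ℝ) (r p n : ℕ) : ℝ :=
  ∑ k ∈ (Fintype.piFinset fun _ : Fin r => Finset.Icc (p + 1) n).filter
      (fun k => ∀ i j : Fin r, i < j → k i < k j),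
    ∏ i : Fin r, Rkl a η (if (i : ℕ) = 0 then p + 1 else k ⟨(i : ℕ) - 1, Nat.lt_of_le_of_lt (Nat.sub_le _ _) i.isLt⟩ + 1) (k i)

noncomputable def Grec (a η : ℕ → ℝ) (n : ℕ) : ℕ → ℕ → ℝ
  | 0, _ => 1
  | r + 1, p => ∑ m ∈ Finset.Icc (p + 1) n, Rkl a η (p + 1) m * Grec a η n r m

lemma Delta_eq_Gdef (a η : ℕ → ℝ) (r n : ℕ) : Delta a η r n = Gdef a η r 0 n := rfl

lemma Gdef_succ (a η : ℕ → ℝ) (r p n : ℕ) :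
    Gdef a η (r + 1) p n = ∑ m ∈ Finset.Icc (p + 1) n, Rkl a η (p + 1) m * Gdef a η r m n := by
  unfold Gdef
  simp_rw [Finset.mul_sum]
  rw [Finset.sum_sigma']
  symm
  refine Finset.sum_bij' (fun x _ => (Fin.cons x.1 x.2 : Fin (r + 1) → ℕ))
    (fun k _ => ⟨k 0, Fin.tail k⟩) ?_ ?_ ?_ ?_ ?_
  · rintro ⟨m, k⟩ h
    simp only [Finset.mem_sigma, Finset.mem_filter, Fintype.mem_piFinset, Finset.mem_Icc] at h ⊢
    obtain ⟨h1, h2, h3⟩ := h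
    constructor
    · intro i
      refine Fin.cases ?_ (fun i => ?_) i
      · simpa using h1
      · have := h2 i
        simp only [Fin.cons_succ]
        omega
    · intro i j
      refine Fin.cases ?_ (fun i => ?_) i
      · refine Fin.cases ?_ (fun j => ?_) j
        · intro h; exact absurd h (lt_irrefl _)
        · intro _
          have := h2 j
          simp only [Fin.cons_succ, Fin.cons_zero]
          omega
      · refine Fin.cases ?_ (fun j => ?_) j
        · intro h; exact absurd h (by simp)
        · intro h
          simp only [Fin.cons_succ]
          exact h3 i j (by simpa using h)
  · intro k h
    simp only [Finset.mem_sigma, Finset.mem_filter, Fintype.mem_piFinset, Finset.mem_Icc] at h ⊢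
    obtain ⟨h1, h2⟩ := h
    refine ⟨h1 0, fun i => ?_, fun i j hij => ?_⟩
    · have := h2 0 i.succ (Fin.succ_pos i)
      have := h1 i.succ
      simp only [Fin.tail]
      omega
    · exact h2 i.succ j.succ (by simpa using hij)
  · rintro ⟨m, k⟩ h
    simp
  · intro k h
    simp
  · rintro ⟨m, k⟩ h
    rw [Fin.prod_univ_succ]
    simp only [Fin.val_zero, if_true, Fin.cons_zero, Fin.cons_succ, Fin.val_succ]
    congr 1
    refine Finset.prod_congr rfl fun i _ => ?_
    congr 1
    rw [if_neg (Nat.succ_ne_zero _)]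
    obtain ⟨i, hi⟩ := i
    cases i with
    | zero => simp
    | succ i =>
      simp only [Nat.succ_ne_zero, if_false]
      rfl

lemma rho_pos (a : ℕ → ℝ) (ha : ∀ k : ℕ, 1 ≤ k → 0 < a k) (n : ℕ) : 0 < rho a n :=
  Finset.prod_pos fun k hk => ha k (Finset.mem_Icc.1 hk).1

lemma rho_shift (a : ℕ → ℝ) (j n : ℕ) : rho a j * rho (shift a j) n = rho a (n + j) := by
  induction n with
  | zero => simp [rho]
  | succ n ih =>
    rw [rho_succ, ← mul_assoc, ih, show n + 1 + j = (n + j) + 1 by ring, rho_succ]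
    simp only [shift]
    congr 2
    ring

lemma Rkl_shift (a η : ℕ → ℝ) (ha : ∀ k : ℕ, 1 ≤ k → 0 < a k) (j k l : ℕ) :
    Rkl (shift a j) (shift η j) k l = Rkl a η (k + j) (l + j) := by
  unfold Rkl
  rw [← Finset.map_add_right_Icc, Finset.sum_map]
  refine Finset.sum_congr rfl fun s _ => ?_
  simp only [addRightEmbedding_apply]
  rw [← rho_shift a j l, ← rho_shift a j s, mul_div_mul_left _ _ (rho_pos a ha j).ne']
  rfl

lemma Gdef_shift (a η : ℕ → ℝ) (ha : ∀ k : ℕ, 1 ≤ k → 0 < a k) (j r n : ℕ) : ∀ p : ℕ,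
    Gdef (shift a j) (shift η j) r p n = Grec a η (n + j) r (p + j) := by
  induction r with
  | zero => intro p; simp [Gdef, Grec]
  | succ r ih =>
    intro p
    rw [Gdef_succ, Grec, show p + j + 1 = (p + 1) + j by ring, ← Finset.map_add_right_Icc,
      Finset.sum_map]
    refine Finset.sum_congr rfl fun m _ => ?_
    rw [Rkl_shift a η ha, ih]
    rfl

lemma Grec_zero (a η : ℕ → ℝ) (n r : ℕ) : ∀ p : ℕ, n < r + p → 0 < r → Grec a η n r p = 0 := by
  induction r with
  | zero => intro p _ h; exact absurd h (lt_irrefl _)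
  | succ r ih =>
    intro p hp _
    rw [Grec]
    refine Finset.sum_eq_zero fun m hm => ?_
    rw [Finset.mem_Icc] at hm
    rw [ih m (by omega) (by omega), mul_zero]

lemma normSq_expand (g : ℕ → ℝ) (N : ℕ) (hg : ∀ r, N < r → g r = 0) (t : ℝ) :
    Complex.normSq (∑ r ∈ Finset.range (N + 1), (-(Complex.I * t)) ^ r * (g r : ℂ)) =
      ∑ r ∈ Finset.range (N + 1), t ^ (2 * r) *
        ∑ p ∈ Finset.Icc (-(r : ℤ)) (r : ℤ),
          (-1 : ℝ) ^ p * g ((r : ℤ) + p).toNat * g ((r : ℤ) - p).toNat := by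
  set x : ℕ → ℂ := fun r => (-(Complex.I * t)) ^ r * (g r : ℂ) with hx
  set y : ℕ → ℂ := fun r => ((Complex.I * t)) ^ r * (g r : ℂ) with hy
  have hconj : (starRingEnd ℂ) (∑ r ∈ Finset.range (N + 1), x r) = ∑ r ∈ Finset.range (N + 1), y r := by
    rw [map_sum]
    refine Finset.sum_congr rfl fun r _ => ?_
    simp [hx, hy]
  have hpoly : ∀ z : ℕ → ℂ, (∀ r, N < r → z r = 0) → ∃ P : Polynomial ℂ, P.natDegree ≤ N ∧
      (∀ i, P.coeff i = z i) ∧ P.eval 1 = ∑ r ∈ Finset.range (N + 1), z r := by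
    intro z hz
    have hc : ∀ i, (∑ r ∈ Finset.range (N + 1), Polynomial.monomial r (z r)).coeff i = z i := by
      intro i
      rw [Polynomial.finsetSum_coeff]
      simp only [Polynomial.coeff_monomial]
      rw [Finset.sum_ite_eq']
      split_ifs with h
      · rfl
      · rw [hz i (by simpa using h)]
    refine ⟨∑ r ∈ Finset.range (N + 1), Polynomial.monomial r (z r), ?_, hc, ?_⟩
    · rw [Polynomial.natDegree_le_iff_coeff_eq_zero]
      intro i hi
      rw [hc, hz i hi]
    · simp [Polynomial.eval_finsetSum]
  obtain ⟨P, hPd, hPc, hPe⟩ := hpoly x (fun r hr => by simp [hx, hg r hr])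
  obtain ⟨Q, hQd, hQc, hQe⟩ := hpoly y (fun r hr => by simp [hy, hg r hr])
  have hmul : (∑ r ∈ Finset.range (N + 1), x r) * (∑ r ∈ Finset.range (N + 1), y r) =
      ∑ s ∈ Finset.range (2 * (N + 1)), ∑ ij ∈ Finset.HasAntidiagonal.antidiagonal s, x ij.1 * y ij.2 := by
    rw [← hPe, ← hQe, ← Polynomial.eval_mul, Polynomial.eval_eq_sum_range' (n := 2 * (N + 1))]
    · refine Finset.sum_congr rfl fun s _ => ?_
      rw [Polynomial.coeff_mul, one_pow, mul_one]
      simp only [hPc, hQc]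
    · have := Polynomial.natDegree_mul_le (p := P) (q := Q)
      omega
  have hterm : ∀ s, ∑ ij ∈ Finset.HasAntidiagonal.antidiagonal s, x ij.1 * y ij.2 =
      (Complex.I * t) ^ s * ((∑ ij ∈ Finset.HasAntidiagonal.antidiagonal s, (-1) ^ ij.1 * g ij.1 * g ij.2 : ℝ) : ℂ) := by
    intro s
    push_cast
    rw [Finset.mul_sum]
    refine Finset.sum_congr rfl fun ij hij => ?_
    rw [Finset.HasAntidiagonal.mem_antidiagonal] at hij
    rw [← hij]
    simp only [hx, hy]
    rw [neg_pow (Complex.I * (t : ℂ)), pow_add]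
    ring
  have hsplit : ∀ (F : ℕ → ℝ) (M : ℕ), ∑ s ∈ Finset.range (2 * M), F s =
      ∑ r ∈ Finset.range M, (F (2 * r) + F (2 * r + 1)) := by
    intro F M
    induction M with
    | zero => simp
    | succ M ih =>
      rw [show 2 * (M + 1) = 2 * M + 1 + 1 by ring, Finset.sum_range_succ, Finset.sum_range_succ, ih,
        Finset.sum_range_succ]
      ring
  have h1 : Complex.normSq (∑ r ∈ Finset.range (N + 1), x r) =
      ((∑ r ∈ Finset.range (N + 1), x r) * (∑ r ∈ Finset.range (N + 1), y r)).re := by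
    rw [← hconj, Complex.mul_conj, Complex.ofReal_re]
  rw [h1, hmul, Complex.re_sum, hsplit]
  refine Finset.sum_congr rfl fun r _ => ?_
  rw [hterm, hterm]
  have e1 : (Complex.I * (t : ℂ)) ^ (2 * r) = (((-1) ^ r * t ^ (2 * r) : ℝ) : ℂ) := by
    rw [mul_pow, pow_mul, Complex.I_sq]; push_cast; rfl
  have e2 : (Complex.I * (t : ℂ)) ^ (2 * r + 1) = (((-1) ^ r * t ^ (2 * r) * t : ℝ) : ℂ) * Complex.I := by
    rw [pow_succ, e1]; push_cast; ring
  have e3 : ∀ u v : ℝ, ((u : ℂ) * Complex.I * (v : ℂ)).re = 0 := by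
    intro u v; simp
  rw [e1, e2, e3, add_zero, ← Complex.ofReal_mul, Complex.ofReal_re, mul_comm ((-1 : ℝ) ^ r), mul_assoc]
  congr 1
  rw [Finset.mul_sum]
  refine Finset.sum_bij' (fun ij _ => (ij.1 : ℤ) - r)
    (fun p _ => (((r : ℤ) + p).toNat, ((r : ℤ) - p).toNat)) ?_ ?_ ?_ ?_ ?_
  · rintro ⟨i, j⟩ h
    simp only [Finset.HasAntidiagonal.mem_antidiagonal, Finset.mem_Icc] at h ⊢
    omega
  · intro p h
    simp only [Finset.HasAntidiagonal.mem_antidiagonal, Finset.mem_Icc] at h ⊢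
    omega
  · rintro ⟨i, j⟩ h
    simp only [Finset.HasAntidiagonal.mem_antidiagonal] at h
    simp only [Prod.mk.injEq]
    omega
  · intro p h
    simp only [Finset.mem_Icc] at h
    simp only
    omega
  · rintro ⟨i, j⟩ h
    simp only [Finset.HasAntidiagonal.mem_antidiagonal] at h
    simp only
    rw [show ((r : ℤ) + (i - r)).toNat = i by omega, show ((r : ℤ) - (i - r)).toNat = j by omega]
    rw [zpow_sub₀ (by norm_num), zpow_natCast, zpow_natCast]
    have : ((-1 : ℝ) ^ r) * (-1) ^ r = 1 := by rw [← mul_pow]; norm_num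
    have h2 : ((-1 : ℝ) ^ r) ≠ 0 := pow_ne_zero _ (by norm_num)
    field_simp
    linear_combination (g i * g j) * this

/-- the backward solutions -/
noncomputable def Dp (a η : ℕ → ℝ) (t : ℝ) (N p : ℕ) : ℂ :=
  ∑ r ∈ Finset.range (N + 1), (-(Complex.I * t)) ^ r * (Grec a η N r p : ℂ)

noncomputable def Cp (a η : ℕ → ℝ) (t : ℝ) (N p : ℕ) : ℂ :=
  ∑ m ∈ Finset.Icc p N, ((rho a m / rho a p : ℝ) : ℂ) * Dp a η t N m

lemma Dp_rec (a η : ℕ → ℝ) (t : ℝ) (N p : ℕ) :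
    Dp a η t N p = 1 - Complex.I * t * ∑ m ∈ Finset.Icc (p + 1) N, (Rkl a η (p + 1) m : ℂ) * Dp a η t N m := by
  have h : Dp a η t N p = ∑ r ∈ Finset.range (N + 2), (-(Complex.I * t)) ^ r * (Grec a η N r p : ℂ) := by
    rw [Finset.sum_range_succ, Grec_zero a η N (N + 1) p (by omega) (by omega)]
    simp [Dp]
  rw [h, Finset.sum_range_succ']
  simp only [Grec, pow_zero, Complex.ofReal_one, mul_one, Dp]
  simp_rw [Finset.mul_sum]
  rw [Finset.sum_comm, add_comm, sub_eq_add_neg, ← Finset.sum_neg_distrib]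
  congr 1
  have : ∀ r, (-(Complex.I * (t : ℂ))) ^ (r + 1) * ((∑ m ∈ Finset.Icc (p + 1) N, Rkl a η (p + 1) m * Grec a η N r m : ℝ) : ℂ)
     = ∑ m ∈ Finset.Icc (p + 1) N, -(Complex.I * t * (Rkl a η (p + 1) m * ((-(Complex.I * t)) ^ r * (Grec a η N r m : ℂ)))) := by
    intro r
    push_cast
    rw [Finset.mul_sum]
    refine Finset.sum_congr rfl fun m _ => ?_
    ring
  simp_rw [this, Finset.sum_neg_distrib]

lemma Rkl_split (a η : ℕ → ℝ) (k l : ℕ) (h : k ≤ l) :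
    Rkl a η k l = Rkl a η (k + 1) l + η k * (rho a l / rho a k) := by
  unfold Rkl
  rw [sum_Icc_split h, add_comm]

lemma Dp_step (a η : ℕ → ℝ) (t : ℝ) (N p : ℕ) :
    Dp a η t N p = Dp a η t N (p + 1) - Complex.I * t * η (p + 1) * Cp a η t N (p + 1) := by
  rw [Dp_rec a η t N p, Dp_rec a η t N (p + 1), Cp]
  have : ∑ m ∈ Finset.Icc (p + 1) N, (Rkl a η (p + 1) m : ℂ) * Dp a η t N m =
      ∑ m ∈ Finset.Icc (p + 1) N, (Rkl a η (p + 1 + 1) m : ℂ) * Dp a η t N m +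
      η (p + 1) * ∑ m ∈ Finset.Icc (p + 1) N, ((rho a m / rho a (p + 1) : ℝ) : ℂ) * Dp a η t N m := by
    rw [Finset.mul_sum, ← Finset.sum_add_distrib]
    refine Finset.sum_congr rfl fun m hm => ?_
    rw [Rkl_split a η _ _ (Finset.mem_Icc.1 hm).1]
    push_cast
    ring
  rw [this]
  have h2 : ∑ m ∈ Finset.Icc (p + 1) N, (Rkl a η (p + 1 + 1) m : ℂ) * Dp a η t N m =
      ∑ m ∈ Finset.Icc (p + 1 + 1) N, (Rkl a η (p + 1 + 1) m : ℂ) * Dp a η t N m := by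
    symm
    refine Finset.sum_subset (Finset.Icc_subset_Icc_left (by omega)) fun m hm hm' => ?_
    rw [Finset.mem_Icc] at hm hm'
    have : Rkl a η (p + 1 + 1) m = 0 := by
      unfold Rkl
      rw [Finset.Icc_eq_empty (by omega), Finset.sum_empty]
    rw [this]; simp
  rw [h2]
  ring

lemma Cp_step (a η : ℕ → ℝ) (ha : ∀ k : ℕ, 1 ≤ k → 0 < a k) (t : ℝ) (N p : ℕ) (hp : p ≤ N) :
    Cp a η t N p = Dp a η t N p + a (p + 1) * Cp a η t N (p + 1) := by
  have h0 := (rho_pos a ha p).ne'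
  have h1 := (ha (p + 1) (by omega)).ne'
  unfold Cp
  rw [sum_Icc_split hp, div_self h0, Complex.ofReal_one, one_mul, Finset.mul_sum]
  congr 1
  refine Finset.sum_congr rfl fun m _ => ?_
  rw [← mul_assoc, ← Complex.ofReal_mul, rho_succ]
  congr 2
  field_simp

lemma Cp_top (a η : ℕ → ℝ) (t : ℝ) (N : ℕ) : Cp a η t N (N + 1) = 0 := by
  unfold Cp
  rw [Finset.Icc_eq_empty (by omega), Finset.sum_empty]

lemma Dp_top (a η : ℕ → ℝ) (t : ℝ) (N : ℕ) : Dp a η t N N = 1 := by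
  rw [Dp_rec, Finset.Icc_eq_empty (by omega), Finset.sum_empty]; simp

lemma Cp_N (a η : ℕ → ℝ) (ha : ∀ k : ℕ, 1 ≤ k → 0 < a k) (t : ℝ) (N : ℕ) : Cp a η t N N = 1 := by
  rw [Cp_step a η ha t N N le_rfl, Cp_top, Dp_top]; simp

lemma Cp_rec (a η : ℕ → ℝ) (ha : ∀ k : ℕ, 1 ≤ k → 0 < a k) (t : ℝ) (N p : ℕ) (hp : p + 1 ≤ N) :
    Cp a η t N p = (1 + a (p + 1) - Complex.I * t * η (p + 1)) * Cp a η t N (p + 1)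
      - a (p + 2) * Cp a η t N (p + 2) := by
  have h1 := Cp_step a η ha t N p (by omega)
  have h2 := Cp_step a η ha t N (p + 1) hp
  have h3 := Dp_step a η t N p
  linear_combination h1 - h2 + h3

lemma energy (a η : ℕ → ℝ) (ha : ∀ k : ℕ, 1 ≤ k → 0 < a k) (t : ℝ) (N d : ℕ) : ∀ p, p + d = N →
    rho a p * (Dp a η t N p * star (Cp a η t N p)).re =
      ∑ m ∈ Finset.Icc p N, rho a m * Complex.normSq (Dp a η t N m) := by
  induction d with
  | zero =>
    intro p hp
    obtain rfl : p = N := by omega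
    simp [Cp_N a η ha, Dp_top]
  | succ d ih =>
    intro p hp
    have h := ih (p + 1) (by omega)
    rw [sum_Icc_split (show p ≤ N by omega)]
    rw [← h, rho_succ]
    have h1 := Cp_step a η ha t N p (by omega)
    have h3 := Dp_step a η t N p
    have e1 : (Dp a η t N p * star (Cp a η t N p)).re = Complex.normSq (Dp a η t N p)
        + a (p + 1) * (Dp a η t N p * star (Cp a η t N (p + 1))).re := by
      rw [h1]
      simp [Complex.normSq_apply]
      ring
    have e2 : (Dp a η t N p * star (Cp a η t N (p + 1))).re =
        (Dp a η t N (p + 1) * star (Cp a η t N (p + 1))).re := by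
      rw [h3]
      simp
      ring
    rw [e1, e2]
    ring

/-- `Re((B n - A n) · conj (B n)) = ∑_{r=0}^n t^{2r} M_r(n)` with
`M_r(n) = ∑_{0≤k≤n} ρ k · θ^k K_r(n-k)`. -/
theorem stmt_16
    (a η : ℕ → ℝ) (ha : ∀ k : ℕ, 1 ≤ k → 0 < a k) (t : ℝ)
    (B : ℤ → ℂ) (hBm : B (-1) = 0) (hB0 : B 0 = 1)
    (hB : ∀ n : ℕ, 1 ≤ n →
      B (n : ℤ) = (((1 + a n : ℝ) : ℂ) - Complex.I * (t : ℂ) * ((η n : ℝ) : ℂ)) * B ((n : ℤ) - 1)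
        - ((a n : ℝ) : ℂ) * B ((n : ℤ) - 2))
    (A : ℤ → ℂ) (hA0 : A 0 = 0) (hA1 : A 1 = ((a 1 : ℝ) : ℂ))
    (hA : ∀ n : ℕ, 2 ≤ n →
      A (n : ℤ) = (((1 + a n : ℝ) : ℂ) - Complex.I * (t : ℂ) * ((η n : ℝ) : ℂ)) * A ((n : ℤ) - 1)
        - ((a n : ℝ) : ℂ) * A ((n : ℤ) - 2)) :
    ∀ n : ℕ,
      ((B (n : ℤ) - A (n : ℤ)) * star (B (n : ℤ))).re =
        ∑ r ∈ Finset.range (n + 1), t ^ (2 * r) *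
          ∑ k ∈ Finset.range (n + 1), rho a k * Kr (shift a k) (shift η k) r (n - k) := by
  intro N
  have hBC : ∀ k : ℕ, k ≤ N → B k * Cp a η t N k - a (k + 1) * B ((k : ℤ) - 1) * Cp a η t N (k + 1)
      = Cp a η t N 0 := by
    intro k
    induction k with
    | zero => intro _; simp [hB0, hBm]
    | succ k ih =>
      intro hk
      rw [← ih (by omega), Cp_rec a η ha t N k hk, hB (k + 1) (by omega)]
      push_cast
      rw [show (k : ℤ) + 1 - 1 = k by ring, show (k : ℤ) + 1 - 2 = k - 1 by ring]
      ring
  have hAC : ∀ k : ℕ, k + 1 ≤ N → A ((k + 1 : ℕ) : ℤ) * Cp a η t N (k + 1)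
      - a (k + 2) * A (k : ℤ) * Cp a η t N (k + 2) = a 1 * Cp a η t N 1 := by
    intro k
    induction k with
    | zero => intro _; simp [hA0, hA1]
    | succ k ih =>
      intro hk
      rw [← ih (by omega), Cp_rec a η ha t N (k + 1) hk, hA (k + 1 + 1) (by omega)]
      push_cast
      rw [show (k : ℤ) + 1 + 1 - 1 = k + 1 by ring, show (k : ℤ) + 1 + 1 - 2 = k by ring]
      ring
  have hBN : B N = Cp a η t N 0 := by
    rw [← hBC N le_rfl, Cp_top, Cp_N a η ha]; ring
  have hAN : A N = a 1 * Cp a η t N 1 := by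
    cases N with
    | zero => rw [Cp_top]; simp [hA0]
    | succ M => rw [← hAC M le_rfl, Cp_top, Cp_N a η ha]; ring
  have hD : B N - A N = Dp a η t N 0 := by
    rw [hBN, hAN, Cp_step a η ha t N 0 (by omega)]; ring
  rw [hD, hBN]
  have hE := energy a η ha t N N 0 (by omega)
  rw [show rho a 0 = 1 by simp [rho], one_mul] at hE
  rw [hE]
  simp_rw [Finset.mul_sum]
  rw [Finset.sum_comm, Finset.range_eq_Ico]
  refine Finset.sum_congr (by ext; simp) fun k hk => ?_
  have hk : k ≤ N := by simp at hk; omega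
  rw [Dp, normSq_expand (fun r => Grec a η N r k) N (fun r hr => Grec_zero a η N r k (by omega) (by omega)) t,
    Finset.mul_sum, Finset.range_eq_Ico]
  refine Finset.sum_congr rfl fun r _ => ?_
  have hK : Kr (shift a k) (shift η k) r (N - k) = ∑ p ∈ Finset.Icc (-(r : ℤ)) (r : ℤ),
      (-1 : ℝ) ^ p * Grec a η N ((r : ℤ) + p).toNat k * Grec a η N ((r : ℤ) - p).toNat k := by
    unfold Kr
    refine Finset.sum_congr rfl fun p _ => ?_
    rw [Delta_eq_Gdef, Delta_eq_Gdef, Gdef_shift a η ha, Gdef_shift a η ha, Nat.sub_add_cancel hk,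
      Nat.zero_add]
  rw [hK]
  ring
end
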